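/- arXiv:2112.15182 — 3 statements merged into one kernel-verified Lean document; each statement's English description precedes it below -/
import Mathlib

section
/- (Matrix inverse lifting lemma.) Let M be an invertible n×n matrix over ℂ and let (P, Q) be complementary projection frames with P ∈ ℂ^{n×r}, Q ∈ ℂ^{n×(n−r)}. If PᵀMP and QᵀM⁻¹Q are both invertible, then P(PᵀMP)⁻¹Pᵀ = M⁻¹ − M⁻¹Q(QᵀM⁻¹Q)⁻¹QᵀM⁻¹. -/
open Matrix

/-- Matrix inverse lifting lemma: for invertible `M` and complementary projection frames
`(P, Q)`, if `PᵀMP` and `QᵀM⁻¹Q` are invertible then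
`P(PᵀMP)⁻¹Pᵀ = M⁻¹ − M⁻¹Q(QᵀM⁻¹Q)⁻¹QᵀM⁻¹`. -/
theorem matrix_inverse_lifting
    {n r : ℕ} (hr : r ≤ n)
    (M : Matrix (Fin n) (Fin n) ℂ)
    (P : Matrix (Fin n) (Fin r) ℂ) (Q : Matrix (Fin n) (Fin (n - r)) ℂ)
    (hP : Pᵀ * P = 1) (hQ : Qᵀ * Q = 1) (hQP : Qᵀ * P = 0)
    (hM : IsUnit M) (hMPP : IsUnit (Pᵀ * M * P)) (hMiQQ : IsUnit (Qᵀ * M⁻¹ * Q)) :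
    P * (Pᵀ * M * P)⁻¹ * Pᵀ = M⁻¹ - M⁻¹ * Q * (Qᵀ * M⁻¹ * Q)⁻¹ * Qᵀ * M⁻¹ := by
  have hPQ : Pᵀ * Q = 0 := by
    have h := congrArg Matrix.transpose hQP
    simpa [Matrix.transpose_mul] using h
  have hsum : P * Pᵀ + Q * Qᵀ = 1 := by
    have e : Fin n ≃ Fin r ⊕ Fin (n - r) :=
      (finCongr (by omega : n = r + (n - r))).trans finSumFinEquiv.symm
    have h1 : fromRows Pᵀ Qᵀ * fromCols P Q = 1 := by
      rw [fromRows_mul_fromCols, hP, hQ, hQP, hPQ, fromBlocks_one]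
    rw [← fromCols_mul_fromRows]
    exact (fromCols_mul_fromRows_eq_one_comm e P Q Pᵀ Qᵀ).2 h1
  rw [Matrix.isUnit_iff_isUnit_det] at hM hMPP hMiQQ
  generalize hA : (Pᵀ * M * P)⁻¹ = A
  generalize hB : (Qᵀ * M⁻¹ * Q)⁻¹ = B
  have hA1 : A * (Pᵀ * M * P) = 1 := by rw [← hA]; exact nonsing_inv_mul _ hMPP
  have hB1 : Qᵀ * M⁻¹ * Q * B = 1 := by rw [← hB]; exact mul_nonsing_inv _ hMiQQ
  have hM1 : M * M⁻¹ = 1 := mul_nonsing_inv _ hM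
  generalize hX : M⁻¹ - M⁻¹ * Q * B * Qᵀ * M⁻¹ = X
  have h1 : Qᵀ * X = 0 := by
    have : Qᵀ * X = Qᵀ * M⁻¹ - (Qᵀ * M⁻¹ * Q * B) * (Qᵀ * M⁻¹) := by
      rw [← hX, Matrix.mul_sub]; simp only [Matrix.mul_assoc]
    rw [this, hB1, Matrix.one_mul, sub_self]
  have h2 : Pᵀ * M * X = Pᵀ := by
    have : Pᵀ * M * X = Pᵀ * (M * M⁻¹) - Pᵀ * ((M * M⁻¹) * (Q * (B * (Qᵀ * M⁻¹)))) := by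
      rw [← hX, Matrix.mul_sub]; simp only [Matrix.mul_assoc]
    rw [this, hM1, Matrix.one_mul, Matrix.mul_one, ← Matrix.mul_assoc, hPQ, Matrix.zero_mul,
      sub_zero]
  have h3 : P * (Pᵀ * X) = X := by
    have : (P * Pᵀ + Q * Qᵀ) * X = X := by rw [hsum, Matrix.one_mul]
    rwa [Matrix.add_mul, Matrix.mul_assoc, Matrix.mul_assoc Q, h1, Matrix.mul_zero, add_zero]
      at this
  have h4 : A * Pᵀ = Pᵀ * X := by
    calc A * Pᵀ = A * (Pᵀ * M * (P * (Pᵀ * X))) := by rw [h3, h2]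
      _ = A * (Pᵀ * M * P) * (Pᵀ * X) := by simp only [Matrix.mul_assoc]
      _ = Pᵀ * X := by rw [hA1, Matrix.one_mul]
  rw [Matrix.mul_assoc, h4, h3]
end

section
/- Let A ∈ ℂ^{n×n}, let (P, Q) be complementary projection frames with P ∈ ℂ^{n×r}, Q ∈ ℂ^{n×(n−r)}, and let s ∈ ℂ be such that Φ = sI_n − A, sI_r − PᵀAP, and QᵀΦ⁻¹Q are all invertible. Then Φ⁻¹Q(QᵀΦ⁻¹Q)⁻¹ = Q + P(sI_r − PᵀAP)⁻¹PᵀAQ. -/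
open Matrix

/-- `Φ⁻¹Q(QᵀΦ⁻¹Q)⁻¹ = Q + P(sI_r − PᵀAP)⁻¹PᵀAQ` where `Φ = sI_n − A`,
for complementary projection frames `(P, Q)`. -/
theorem prom_theta_factor_identity
    {n r : ℕ} (hr : r ≤ n)
    (A : Matrix (Fin n) (Fin n) ℂ)
    (P : Matrix (Fin n) (Fin r) ℂ) (Q : Matrix (Fin n) (Fin (n - r)) ℂ)
    (hP : Pᵀ * P = 1) (hQ : Qᵀ * Q = 1) (hQP : Qᵀ * P = 0)
    (s : ℂ)
    (hΦ : IsUnit (s • (1 : Matrix (Fin n) (Fin n) ℂ) - A))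
    (hΦr : IsUnit (s • (1 : Matrix (Fin r) (Fin r) ℂ) - Pᵀ * A * P))
    (hΔ : IsUnit (Qᵀ * (s • (1 : Matrix (Fin n) (Fin n) ℂ) - A)⁻¹ * Q)) :
    (s • (1 : Matrix (Fin n) (Fin n) ℂ) - A)⁻¹ * Q *
        (Qᵀ * (s • (1 : Matrix (Fin n) (Fin n) ℂ) - A)⁻¹ * Q)⁻¹ =
      Q + P * (s • (1 : Matrix (Fin r) (Fin r) ℂ) - Pᵀ * A * P)⁻¹ * (Pᵀ * A * Q) := by
  have hPQ : Pᵀ * Q = 0 := by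
    have h := congrArg Matrix.transpose hQP
    simpa [Matrix.transpose_mul] using h
  have hU : P * Pᵀ + Q * Qᵀ = 1 := by
    have h1 : fromRows Pᵀ Qᵀ * fromCols P Q = 1 := by
      rw [fromRows_mul_fromCols, hP, hQ, hQP, hPQ, fromBlocks_one]
    have h2 : fromCols P Q * fromRows Pᵀ Qᵀ = 1 := by
      rw [mul_eq_one_comm_of_card_eq]
      · exact h1
      · simp; omega
    rwa [fromCols_mul_fromRows] at h2
  have hR : Pᵀ * (s • (1 : Matrix (Fin n) (Fin n) ℂ) - A) * P
      = s • (1 : Matrix (Fin r) (Fin r) ℂ) - Pᵀ * A * P := by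
    simp [Matrix.mul_sub, Matrix.sub_mul, hP]
  have hS : Pᵀ * (s • (1 : Matrix (Fin n) (Fin n) ℂ) - A) * Q = - (Pᵀ * A * Q) := by
    simp [Matrix.mul_sub, Matrix.sub_mul, hPQ]
  generalize s • (1 : Matrix (Fin n) (Fin n) ℂ) - A = Φ at *
  generalize s • (1 : Matrix (Fin r) (Fin r) ℂ) - Pᵀ * A * P = R at *
  generalize Pᵀ * A * Q = B at *
  have hΦ' := (Matrix.isUnit_iff_isUnit_det _).1 hΦ
  have hR' := (Matrix.isUnit_iff_isUnit_det _).1 hΦr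
  have hΔ' := (Matrix.isUnit_iff_isUnit_det _).1 hΔ
  set X := Q + P * R⁻¹ * B with hX
  have hQX : Qᵀ * X = 1 := by
    rw [hX, Matrix.mul_add, hQ, ← Matrix.mul_assoc, ← Matrix.mul_assoc, hQP]
    simp
  have hPX : Pᵀ * (Φ * X) = 0 := by
    rw [hX, ← Matrix.mul_assoc, Matrix.mul_add, hS, ← Matrix.mul_assoc, ← Matrix.mul_assoc, hR,
      Matrix.mul_nonsing_inv _ hR']
    simp
  have hY : Φ * X = Q * (Qᵀ * (Φ * X)) := by
    calc Φ * X = (P * Pᵀ + Q * Qᵀ) * (Φ * X) := by rw [hU, Matrix.one_mul]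
      _ = _ := by rw [Matrix.add_mul, Matrix.mul_assoc, hPX, Matrix.mul_assoc]; simp
  generalize Qᵀ * (Φ * X) = Y at hY
  have hXY : X = Φ⁻¹ * Q * Y := by
    rw [Matrix.mul_assoc, ← hY, Matrix.nonsing_inv_mul_cancel_left _ _ hΦ']
  have hΔY : (Qᵀ * Φ⁻¹ * Q) * Y = 1 := by
    rw [Matrix.mul_assoc Qᵀ, Matrix.mul_assoc Qᵀ, ← hXY, hQX]
  rw [Matrix.inv_eq_right_inv hΔY, ← hXY]
end

section
/- Let A ∈ ℂ^{n×n}, let (P, Q) be complementary projection frames with P ∈ ℂ^{n×r}, Q ∈ ℂ^{n×(n−r)}, and let s ∈ ℂ be such that Φ = sI_n − A, sI_r − PᵀAP, and QᵀΦ⁻¹Q are all invertible. Then (QᵀΦ⁻¹Q)⁻¹QᵀΦ⁻¹ = QᵀAP(sI_r − PᵀAP)⁻¹Pᵀ + Qᵀ. -/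
open Matrix

/-- `(QᵀΦ⁻¹Q)⁻¹QᵀΦ⁻¹ = QᵀAP(sI_r − PᵀAP)⁻¹Pᵀ + Qᵀ` where `Φ = sI_n − A`,
for complementary projection frames `(P, Q)`. -/
theorem prom_gamma_factor_identity
    {n r : ℕ} (hr : r ≤ n)
    (A : Matrix (Fin n) (Fin n) ℂ)
    (P : Matrix (Fin n) (Fin r) ℂ) (Q : Matrix (Fin n) (Fin (n - r)) ℂ)
    (hP : Pᵀ * P = 1) (hQ : Qᵀ * Q = 1) (hQP : Qᵀ * P = 0)
    (s : ℂ)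
    (hΦ : IsUnit (s • (1 : Matrix (Fin n) (Fin n) ℂ) - A))
    (hΦr : IsUnit (s • (1 : Matrix (Fin r) (Fin r) ℂ) - Pᵀ * A * P))
    (hΔ : IsUnit (Qᵀ * (s • (1 : Matrix (Fin n) (Fin n) ℂ) - A)⁻¹ * Q)) :
    (Qᵀ * (s • (1 : Matrix (Fin n) (Fin n) ℂ) - A)⁻¹ * Q)⁻¹ *
        (Qᵀ * (s • (1 : Matrix (Fin n) (Fin n) ℂ) - A)⁻¹) =
      Qᵀ * A * P * (s • (1 : Matrix (Fin r) (Fin r) ℂ) - Pᵀ * A * P)⁻¹ * Pᵀ + Qᵀ := by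
  have hPQ : Pᵀ * Q = 0 := by
    have := congrArg Matrix.transpose hQP
    simpa [Matrix.transpose_mul] using this
  have hc : P * Pᵀ + Q * Qᵀ = 1 := by
    have e : Fin r ⊕ Fin (n - r) ≃ Fin n :=
      finSumFinEquiv.trans (finCongr (by omega))
    have h1 : Matrix.fromRows Pᵀ Qᵀ * Matrix.fromCols P Q = 1 := by
      rw [Matrix.fromRows_mul_fromCols, hP, hQ, hQP, hPQ, Matrix.fromBlocks_one]
    have h2 := (Matrix.mul_eq_one_comm_of_equiv e).1 h1
    rwa [Matrix.fromCols_mul_fromRows] at h2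
  have hΦP : Qᵀ * (s • (1 : Matrix (Fin n) (Fin n) ℂ) - A) * P = - (Qᵀ * A * P) := by
    simp [Matrix.mul_sub, Matrix.sub_mul, hQP]
  have hPP : Pᵀ * (s • (1 : Matrix (Fin n) (Fin n) ℂ) - A) * P
      = s • (1 : Matrix (Fin r) (Fin r) ℂ) - Pᵀ * A * P := by
    simp [Matrix.mul_sub, Matrix.sub_mul, hP]
  have hR := Matrix.nonsing_inv_mul _ ((Matrix.isUnit_iff_isUnit_det _).1 hΦr)
  have hF := Matrix.mul_nonsing_inv _ ((Matrix.isUnit_iff_isUnit_det _).1 hΦ)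
  generalize s • (1 : Matrix (Fin n) (Fin n) ℂ) - A = F at *
  generalize s • (1 : Matrix (Fin r) (Fin r) ℂ) - Pᵀ * A * P = R at *
  obtain ⟨G, hG⟩ : ∃ G, G = Qᵀ * A * P * R⁻¹ * Pᵀ + Qᵀ := ⟨_, rfl⟩
  rw [← hG]
  have hGQ : G * Q = 1 := by
    rw [hG, Matrix.add_mul, Matrix.mul_assoc _ Pᵀ Q, hPQ, hQ, Matrix.mul_zero, zero_add]
  have hGP : G * F * P = 0 := by
    rw [hG, Matrix.add_mul, Matrix.add_mul, hΦP, Matrix.mul_assoc _ Pᵀ F,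
      Matrix.mul_assoc _ (Pᵀ * F) P, hPP, Matrix.mul_assoc _ R⁻¹ R, hR, Matrix.mul_one,
      add_neg_cancel]
  have hK : G * F = G * F * Q * Qᵀ := by
    calc G * F = G * F * (P * Pᵀ + Q * Qᵀ) := by rw [hc, Matrix.mul_one]
      _ = G * F * P * Pᵀ + G * F * Q * Qᵀ := by
        rw [Matrix.mul_add, ← Matrix.mul_assoc, ← Matrix.mul_assoc]
      _ = _ := by rw [hGP, Matrix.zero_mul, zero_add]
  have hG2 : G = G * F * Q * (Qᵀ * F⁻¹) := by
    rw [← Matrix.mul_assoc, ← hK, Matrix.mul_assoc, hF, Matrix.mul_one]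
  have hKD : G * F * Q * (Qᵀ * F⁻¹ * Q) = 1 := by
    rw [← Matrix.mul_assoc, ← hG2, hGQ]
  rw [Matrix.inv_eq_left_inv hKD, ← hG2]
end
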